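/- Let s ∈ (1/2, 3/2) and define p by 2/p = 3/2 − s. Then there exists a constant C > 0 such that for every v ∈ C_c^∞(ℝ³) and every r > 0, r^{3/2−s} ‖v(rω)‖_{L^p(S², dS_ω)} ≤ C ‖ |D|^s v ‖_{L²(ℝ³)}. -/

import Mathlib

/-!
Say that a measure `μ` has dimension `α` if its Gaussian averages at scale `1 / R` are
`O(R ^ (-α))`. If `w` is supported in `‖ξ‖ ≤ R`, then `w` is a Gaussian times a comparable function,
so `𝓕 w` is an average at scale `1 / R`; by Cauchy–Schwarz and Plancherel,
`∫ ‖𝓕 w‖² dμ ≲ R ^ (d - α) ‖w‖₂²`.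

Cut a general `w` into its pieces `w_u` on the frequency shells `exp (u - 1) < ‖ξ‖ ≤ exp u`, and let
`D` be its Sobolev energy `∫ ‖ξ‖ ^ (2 s) ‖w ξ‖²`. By Cauchy–Schwarz `‖𝓕 w_u‖² ≲ D exp ((d - 2 s) u)`
pointwise, and by the trace estimate on each shell `G = ∫ exp ((2 s - d + α) u) ‖𝓕 w_u‖² du` has
`μ`-integral `≲ D`. Using the first fact below a cut-off frequency and the second above it, and
optimising the cut-off at each point as in Hedberg's inequality, gives
`‖𝓕 w‖ ^ p ≲ D ^ (p / 2 - 1) G` with `p = 2 α / (d - 2 s)`, and it remains to integrate in `μ`.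
The surface measure of the sphere of radius `r` has dimension `d - 1` uniformly in `r`.
-/

open MeasureTheory Real ENNReal FourierTransform
open scoped ContDiff

noncomputable section

/-- Euclidean space ℝⁿ. -/
abbrev Spc (n : ℕ) := EuclideanSpace ℝ (Fin n)

/-- Space-time ℝ × ℝⁿ. -/
abbrev STn (n : ℕ) := ℝ × Spc n

variable {n : ℕ}

/-- Directional derivative in the space-time direction `v`. -/
def dirD (v : STn n) (f : STn n → ℝ) : STn n → ℝ := fun p => fderiv ℝ f p v

/-- Time derivative ∂_t. -/
def dtD : (STn n → ℝ) → STn n → ℝ := dirD (1, 0)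

/-- Spatial derivative ∂_j. -/
def dxD (j : Fin n) : (STn n → ℝ) → STn n → ℝ := dirD (0, EuclideanSpace.single j 1)

/-- Spatial Laplacian. -/
def lapD (f : STn n → ℝ) : STn n → ℝ := fun p => ∑ j, dxD j (dxD j f) p

/-- d'Alembertian □ = ∂_t² − Δ. -/
def boxD (f : STn n → ℝ) : STn n → ℝ := fun p => dtD (dtD f) p - lapD f p

/-- Lorentz boost L_j = t ∂_j + x_j ∂_t. -/
def LD (j : Fin n) (f : STn n → ℝ) : STn n → ℝ := fun p => p.1 * dxD j f p + p.2 j * dtD f p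

/-- Rotation Ω_{jk} = x_j ∂_k − x_k ∂_j. -/
def RotD (j k : Fin n) (f : STn n → ℝ) : STn n → ℝ := fun p => p.2 j * dxD k f p - p.2 k * dxD j f p

/-- Scaling S = t ∂_t + x·∇. -/
def SD (f : STn n → ℝ) : STn n → ℝ := fun p => p.1 * dtD f p + ∑ j, p.2 j * dxD j f p

/-- Index type for the Klainerman vector fields. -/
def GIdx (n : ℕ) := Option (Fin n) ⊕ Fin n ⊕ (Fin n × Fin n) ⊕ Unit

instance : Fintype (GIdx n) := by unfold GIdx; infer_instance
instance : DecidableEq (GIdx n) := by unfold GIdx; infer_instance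

/-- The Klainerman vector field with index `i`. -/
def Gop : GIdx n → (STn n → ℝ) → STn n → ℝ
  | Sum.inl none => dtD
  | Sum.inl (some j) => dxD j
  | Sum.inr (Sum.inl j) => LD j
  | Sum.inr (Sum.inr (Sum.inl jk)) => RotD jk.1 jk.2
  | Sum.inr (Sum.inr (Sum.inr _)) => SD

/-- Iterated composition Γ^α along a word of indices. -/
def GwL : List (GIdx n) → (STn n → ℝ) → STn n → ℝ
  | [], f => f
  | a :: l, f => Gop a (GwL l f)

/-- Sum of a quantity over all products of at most `N` Klainerman vector fields. -/
def SumW (N : ℕ) (Φ : (STn n → ℝ) → ℝ≥0∞) (f : STn n → ℝ) : ℝ≥0∞ :=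
  ∑ m ∈ Finset.range (N + 1), ∑ w : Fin m → GIdx n, Φ (GwL (List.ofFn w) f)

/-- Pointwise norm of the full space-time gradient ∂u = (∂_t u, ∇_x u). -/
def gradN (f : STn n → ℝ) (p : STn n) : ℝ := Real.sqrt ((dtD f p) ^ 2 + ∑ j, (dxD j f p) ^ 2)

/-- Fourier transform (in space) of a real valued function. -/
def fourierS (g : Spc n → ℝ) : Spc n → ℂ := 𝓕 (fun x => (g x : ℂ))

/-- ‖ |D|^s g ‖_{L²}, i.e. the L² norm of ξ ↦ |ξ|^s (ℱ g)(ξ). -/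
def DsN (s : ℝ) (g : Spc n → ℝ) : ℝ≥0∞ :=
  eLpNorm (fun ξ : Spc n => ‖ξ‖ ^ s * ‖fourierS g ξ‖) 2 volume

/-- The surface measure on the unit sphere of ℝⁿ. -/
def sphM (n : ℕ) : Measure (Metric.sphere (0 : Spc n) 1) := (volume : Measure (Spc n)).toSphere

/-- The L^q norm of g(r ω) over the unit sphere. -/
def sphN (n : ℕ) (q : ℝ) (g : Spc n → ℝ) (r : ℝ) : ℝ≥0∞ :=
  (∫⁻ o, (‖g (r • (o : Spc n))‖₊ : ℝ≥0∞) ^ q ∂(sphM n)) ^ (1 / q)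

/-- The mixed norm ‖g‖_{p,q} = (∫_0^∞ ‖g(r·)‖_{L^q(S^{n-1})}^p r^{n-1} dr)^{1/p}. -/
def mixN (n : ℕ) (p q : ℝ) (g : Spc n → ℝ) : ℝ≥0∞ :=
  (∫⁻ r in Set.Ioi (0 : ℝ), (sphN n q g r) ^ p * ENNReal.ofReal (r ^ (n - 1))) ^ (1 / p)

/-- A space-time function which is Schwartz in the space variable for each fixed time. -/
def SchwartzInX (v : STn n → ℝ) : Prop :=
  ∀ t : ℝ, ∃ φ : SchwartzMap (Spc n) ℝ, ∀ x, v (t, x) = φ x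

/-- The space-time partial derivatives ∂_0 = ∂_t, ∂_j (j = 1,2,3) on ℝ × ℝ³. -/
def pd4 (α : Fin 4) : (STn 3 → ℝ) → STn 3 → ℝ := Fin.cases dtD (fun j => dxD j) α

/-- The null condition for a set of coefficients {A^{αβ}}. -/
def NullCond (A : Fin 4 → Fin 4 → ℝ) : Prop :=
  ∀ X : Fin 4 → ℝ, (X 0) ^ 2 = (X 1) ^ 2 + (X 2) ^ 2 + (X 3) ^ 2 →
    ∑ α, ∑ β, A α β * X α * X β = 0

/-- The null form A^{αβ} (∂_α v)(∂_β w). -/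
def QF (A : Fin 4 → Fin 4 → ℝ) (v w : STn 3 → ℝ) (p : STn 3) : ℝ :=
  ∑ α, ∑ β, A α β * pd4 α v p * pd4 β w p

/-- The good derivative T_j = ∂_j + (x_j/|x|) ∂_t. -/
def TD (j : Fin 3) (f : STn 3 → ℝ) (p : STn 3) : ℝ := dxD j f p + (p.2 j / ‖p.2‖) * dtD f p

end

section Plancherel

variable {E F : Type*} [NormedAddCommGroup E] [InnerProductSpace ℝ E] [FiniteDimensional ℝ E]
  [MeasurableSpace E] [BorelSpace E]

lemma integral_smul_fourier_eq [NormedAddCommGroup F] [NormedSpace ℂ F] [CompleteSpace F]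
    {g : E → ℂ} {f : E → F} (hg : Integrable g) (hf : Integrable f) :
    ∫ y, g y • 𝓕 f y = ∫ ξ, 𝓕 g ξ • f ξ := by
  simpa only [flip_innerₗ] using! (VectorFourier.integral_fourierIntegral_smul_eq_flip
    (L := innerₗ E) continuous_fourierChar continuous_inner hg hf).symm

lemma continuous_fourier [NormedAddCommGroup F] [NormedSpace ℂ F] {f : E → F}
    (hf : Integrable f) : Continuous (𝓕 f) :=
  VectorFourier.fourierIntegral_continuous continuous_fourierChar (L := innerₗ E)
    continuous_inner hf

variable [NormedAddCommGroup F] [InnerProductSpace ℂ F] [CompleteSpace F]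

lemma coeFn_fourier_toLp {f : E → F} (hf : Integrable f) (hf2 : MemLp f 2) :
    (𝓕 (hf2.toLp f) : Lp F 2 (volume : Measure E)) =ᵐ[volume] 𝓕 f := by
  refine ae_eq_of_integral_contDiff_smul_eq ((Lp.memLp _).locallyIntegrable one_le_two)
    (continuous_fourier hf).locallyIntegrable fun g hg hgc ↦ ?_
  obtain ⟨φ, hφ⟩ : ∃ φ : SchwartzMap E ℂ, ∀ x, φ x = g x :=
    ⟨HasCompactSupport.toSchwartzMap (hgc.comp_left Complex.ofReal_zero)
      (Complex.ofRealCLM.contDiff.comp hg), fun _ ↦ rfl⟩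
  calc ∫ x, g x • (𝓕 (hf2.toLp f) : Lp F 2 (volume : Measure E)) x
      = Lp.toTemperedDistribution (𝓕 (hf2.toLp f) : Lp F 2 (volume : Measure E)) φ := by
        simp only [Lp.toTemperedDistribution_apply, hφ, Complex.coe_smul]
    _ = ∫ x, 𝓕 φ x • hf2.toLp f x := by
        rw [← Lp.fourier_toTemperedDistribution_eq, TemperedDistribution.fourier_apply,
          Lp.toTemperedDistribution_apply]
    _ = ∫ x, 𝓕 (φ : E → ℂ) x • f x := by
        rw [SchwartzMap.fourier_coe]
        exact integral_congr_ae (hf2.coeFn_toLp.mono fun x hx ↦ by simp only [hx])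
    _ = ∫ x, g x • 𝓕 f x := by
        rw [← integral_smul_fourier_eq φ.integrable hf]
        simp only [hφ, Complex.coe_smul]

theorem eLpNorm_fourier_eq {f : E → F} (hf : Integrable f) (hf2 : MemLp f 2) :
    eLpNorm (𝓕 f) 2 volume = eLpNorm f 2 volume := by
  rw [← eLpNorm_congr_ae (coeFn_fourier_toLp hf hf2), ← eLpNorm_congr_ae hf2.coeFn_toLp,
    ← Lp.enorm_def, ← Lp.enorm_def, ← ofReal_norm, ← ofReal_norm, Lp.norm_fourier_eq]

lemma eLpNorm_two_sq {α G : Type*} [MeasurableSpace α] [NormedAddCommGroup G] (μ : Measure α)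
    (f : α → G) : eLpNorm f 2 μ ^ 2 = ∫⁻ x, ‖f x‖ₑ ^ 2 ∂μ := by
  simpa using eLpNorm_nnreal_pow_eq_lintegral (f := f) (μ := μ) (p := 2) two_ne_zero

lemma lintegral_enorm_fourier_sq {f : E → F} (hf : Integrable f) (hf2 : MemLp f 2) :
    ∫⁻ x, ‖𝓕 f x‖ₑ ^ 2 = ∫⁻ ξ, ‖f ξ‖ₑ ^ 2 := by
  rw [← eLpNorm_two_sq, ← eLpNorm_two_sq, eLpNorm_fourier_eq hf hf2]

end Plancherel

section GaussianGrowth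

variable {E : Type*} [NormedAddCommGroup E]

/-- The Gaussian `exp (-π R² ‖x‖²)` of width `1 / R`, a smooth stand-in for the indicator of the
ball of radius `1 / R`. -/
noncomputable def gaussianBump (R : ℝ) (x : E) : ℝ := rexp (-(π * (R * ‖x‖) ^ 2))

lemma gaussianBump_pos (R : ℝ) (x : E) : 0 < gaussianBump R x := exp_pos _

lemma gaussianBump_sub_comm (R : ℝ) (x y : E) :
    gaussianBump R (x - y) = gaussianBump R (y - x) := by
  rw [gaussianBump, gaussianBump, norm_sub_rev]

lemma exp_neg_pi_le_gaussianBump {R : ℝ} (hR : 0 ≤ R) {x : E} (hx : R * ‖x‖ ≤ 1) :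
    rexp (-π) ≤ gaussianBump R x := by
  refine exp_le_exp.2 (neg_le_neg (mul_le_of_le_one_right pi_pos.le ?_))
  exact pow_le_one₀ (by positivity) hx

lemma inv_gaussianBump_inv_le {R : ℝ} (hR : 0 < R) {x : E} (hx : ‖x‖ ≤ R) :
    (gaussianBump R⁻¹ x)⁻¹ ≤ rexp π := by
  rw [← inv_inv (rexp π), ← Real.exp_neg]
  gcongr
  exact exp_neg_pi_le_gaussianBump (by positivity) (by rwa [inv_mul_le_iff₀ hR, mul_one])

@[fun_prop]
lemma continuous_gaussianBump (R : ℝ) : Continuous (gaussianBump R : E → ℝ) := by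
  unfold gaussianBump
  fun_prop

lemma gaussianBump_mul_le (R : ℝ) (x y : E) :
    gaussianBump R x * gaussianBump R y ≤ gaussianBump (R / √2) (x + y) := by
  have parallelogram : ‖x + y‖ ^ 2 ≤ 2 * (‖x‖ ^ 2 + ‖y‖ ^ 2) :=
    (pow_le_pow_left₀ (norm_nonneg _) (norm_add_le x y) 2).trans add_sq_le
  rw [gaussianBump, gaussianBump, gaussianBump, ← exp_add, exp_le_exp, mul_pow (R / √2), div_pow,
    sq_sqrt zero_le_two]
  nlinarith [mul_le_mul_of_nonneg_left parallelogram (mul_nonneg pi_pos.le (sq_nonneg R))]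

lemma gaussianBump_smul [NormedSpace ℝ E] {r : ℝ} (hr : 0 ≤ r) (R : ℝ) (x : E) :
    gaussianBump R (r • x) = gaussianBump (R * r) x := by
  rw [gaussianBump, gaussianBump, norm_smul, Real.norm_of_nonneg hr, mul_assoc]

variable [MeasurableSpace E]

/-- The Gaussian form of `μ (ball x δ) ≲ δ ^ α`: a Gaussian of width `1 / R` has `μ`-mass at most
`K R ^ (-α)`, wherever it is centred. -/
def HasGaussianGrowth (μ : Measure E) (α K : ℝ) : Prop :=
  ∀ R > 0, ∀ x, ∫⁻ y, ENNReal.ofReal (gaussianBump R (x - y)) ∂μ ≤ ENNReal.ofReal (K * R ^ (-α))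

variable [BorelSpace E]

lemma HasGaussianGrowth.map_smul [NormedSpace ℝ E] {μ : Measure E} {α K r : ℝ}
    (hμ : HasGaussianGrowth μ α K) (hr : 0 < r) :
    HasGaussianGrowth (ENNReal.ofReal (r ^ α) • μ.map (r • ·)) α K := by
  intro R hR x
  have rescale (y : E) : gaussianBump R (x - r • y) = gaussianBump (R * r) (r⁻¹ • x - y) := by
    rw [← gaussianBump_smul hr.le, smul_sub, smul_inv_smul₀ hr.ne']
  rw [lintegral_smul_measure, lintegral_map (by fun_prop) (by fun_prop), smul_eq_mul]
  simp only [rescale]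
  refine (mul_le_mul_right (hμ (R * r) (by positivity) (r⁻¹ • x)) _).trans_eq ?_
  rw [← ENNReal.ofReal_mul (by positivity), mul_rpow hR.le hr.le, rpow_neg hr.le]
  field_simp

variable [InnerProductSpace ℝ E] [FiniteDimensional ℝ E]

open Module (finrank)

lemma integral_gaussianBump {R : ℝ} (hR : 0 < R) :
    ∫ x : E, gaussianBump R x = R⁻¹ ^ finrank ℝ E := by
  have gaussian (x : E) : gaussianBump R x = rexp (-(π * R ^ 2) * ‖x‖ ^ 2) := by
    rw [gaussianBump]; ring_nf
  simp only [gaussian]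
  rw [GaussianFourier.integral_rexp_neg_mul_sq_norm (by positivity),
    div_mul_cancel_left₀ pi_ne_zero, ← inv_pow, ← Real.rpow_natCast,
    ← Real.rpow_mul (by positivity), ← Real.rpow_natCast]
  congr 1
  push_cast
  ring

lemma integrable_gaussianBump {R : ℝ} (hR : 0 < R) : Integrable (gaussianBump R : E → ℝ) :=
  .of_integral_ne_zero <| by rw [integral_gaussianBump hR]; positivity

lemma lintegral_gaussianBump_sub {R : ℝ} (hR : 0 < R) (x : E) :
    ∫⁻ y : E, ENNReal.ofReal (gaussianBump R (x - y)) = ENNReal.ofReal (R⁻¹ ^ finrank ℝ E) := by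
  rw [lintegral_sub_left_eq_self (fun y : E ↦ ENNReal.ofReal (gaussianBump R y)) x,
    ← ofReal_integral_eq_lintegral_ofReal (integrable_gaussianBump hR)
      (.of_forall fun x ↦ (gaussianBump_pos R x).le), integral_gaussianBump hR]

end GaussianGrowth

section Sphere

open Module (finrank)

lemma lintegral_eq_lintegral_sphere_prod {E : Type*} [NormedAddCommGroup E] [NormedSpace ℝ E]
    [FiniteDimensional ℝ E] [MeasurableSpace E] [BorelSpace E] [Nontrivial E] (μ : Measure E)
    [μ.IsAddHaarMeasure] {f : E → ℝ≥0∞} (hf : Measurable f) :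
    ∫⁻ x, f x ∂μ = ∫⁻ o, (∫⁻ ρ in Set.Ioi (0 : ℝ),
      ENNReal.ofReal (ρ ^ (finrank ℝ E - 1)) * f (ρ • (o : E))) ∂μ.toSphere := by
  have polar (x : ({0}ᶜ : Set E)) : ((homeomorphUnitSphereProd E x).2 : ℝ) •
      ((homeomorphUnitSphereProd E x).1 : E) = x := by
    rw [← homeomorphUnitSphereProd_symm_apply_coe, Homeomorph.symm_apply_apply]
  have change_var := μ.measurePreserving_homeomorphUnitSphereProd.lintegral_comp_emb
    (Homeomorph.measurableEmbedding _) fun q ↦ f ((q.2 : ℝ) • (q.1 : E))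
  simp only [polar] at change_var
  have puncture : ∫⁻ x, f x ∂μ = ∫⁻ x : ({0}ᶜ : Set E), f x ∂μ.comap (↑) := by
    rw [lintegral_subtype_comap (measurableSet_singleton _).compl, restrict_compl_singleton]
  rw [puncture, change_var, lintegral_prod _ (by fun_prop)]
  refine lintegral_congr fun o ↦ ?_
  rw [Measure.volumeIoiPow, lintegral_withDensity_eq_lintegral_mul _ (by fun_prop) (by fun_prop),
    ← lintegral_subtype_comap measurableSet_Ioi]
  rfl

/- On the shell `1 < ‖x‖ < 1 + 1 / R` a bump of width `1 / R` centred on the sphere is comparable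
to its value at the radial projection. -/
lemma gaussianBump_mul_le_setLIntegral {E : Type*} [NormedAddCommGroup E] [NormedSpace ℝ E]
    {R : ℝ} (hR : 0 < R) (n : ℕ) (x : E) (o : Metric.sphere (0 : E) 1) :
    ENNReal.ofReal (gaussianBump R (x - o)) * ENNReal.ofReal (rexp (-π) / R) ≤
      ∫⁻ ρ in Set.Ioi (0 : ℝ),
        ENNReal.ofReal (ρ ^ n) * ENNReal.ofReal (gaussianBump (R / √2) (x - ρ • (o : E))) := by
  have pointwise {ρ : ℝ} (hρ : ρ ∈ Set.Ioo 1 (1 + R⁻¹)) :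
      gaussianBump R (x - o) * rexp (-π) ≤ ρ ^ n * gaussianBump (R / √2) (x - ρ • (o : E)) := by
    have hρR : R * ‖(1 - ρ) • (o : E)‖ ≤ 1 := by
      rw [norm_smul, norm_eq_of_mem_sphere, mul_one, Real.norm_of_nonpos (by linarith [hρ.1]),
        ← le_div_iff₀' hR]
      rw [one_div]
      linarith [hρ.2]
    calc gaussianBump R (x - o) * rexp (-π)
        ≤ gaussianBump R (x - o) * gaussianBump R ((1 - ρ) • (o : E)) := by
          gcongr
          exacts [(gaussianBump_pos _ _).le, exp_neg_pi_le_gaussianBump hR.le hρR]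
      _ ≤ gaussianBump (R / √2) (x - o + (1 - ρ) • (o : E)) := gaussianBump_mul_le R _ _
      _ = gaussianBump (R / √2) (x - ρ • (o : E)) := by congr 1; module
      _ ≤ ρ ^ n * gaussianBump (R / √2) (x - ρ • (o : E)) :=
          le_mul_of_one_le_left (gaussianBump_pos _ _).le (one_le_pow₀ hρ.1.le)
  calc ENNReal.ofReal (gaussianBump R (x - o)) * ENNReal.ofReal (rexp (-π) / R)
      = ∫⁻ _ in Set.Ioo 1 (1 + R⁻¹), ENNReal.ofReal (gaussianBump R (x - o) * rexp (-π)) := by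
        rw [setLIntegral_const, Real.volume_Ioo, add_sub_cancel_left,
          ENNReal.ofReal_mul (gaussianBump_pos _ _).le, mul_assoc,
          ← ENNReal.ofReal_mul (exp_pos _).le, div_eq_mul_inv]
    _ ≤ ∫⁻ ρ in Set.Ioo 1 (1 + R⁻¹),
        ENNReal.ofReal (ρ ^ n) * ENNReal.ofReal (gaussianBump (R / √2) (x - ρ • (o : E))) := by
        refine setLIntegral_mono' measurableSet_Ioo fun ρ hρ ↦ ?_
        rw [← ENNReal.ofReal_mul (pow_nonneg (zero_le_one.trans hρ.1.le) n)]
        exact ENNReal.ofReal_le_ofReal (pointwise hρ)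
    _ ≤ _ := lintegral_mono_set fun ρ hρ ↦ zero_lt_one.trans hρ.1

theorem hasGaussianGrowth_map_toSphere {E : Type*} [NormedAddCommGroup E] [InnerProductSpace ℝ E]
    [FiniteDimensional ℝ E] [MeasurableSpace E] [BorelSpace E] [Nontrivial E] :
    HasGaussianGrowth ((volume : Measure E).toSphere.map Subtype.val) (finrank ℝ E - 1)
      (rexp π * √2 ^ finrank ℝ E) := by
  intro R hR x
  rw [lintegral_map (by fun_prop) (by fun_prop)]
  have thickened : (∫⁻ o : Metric.sphere (0 : E) 1, ENNReal.ofReal (gaussianBump R (x - o))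
      ∂(volume : Measure E).toSphere) * ENNReal.ofReal (rexp (-π) / R) ≤
      ENNReal.ofReal ((R / √2)⁻¹ ^ finrank ℝ E) := by
    rw [← lintegral_gaussianBump_sub (by positivity) x, lintegral_eq_lintegral_sphere_prod volume
      (by fun_prop), ← lintegral_mul_const _ (by fun_prop)]
    exact lintegral_mono fun o ↦ gaussianBump_mul_le_setLIntegral hR _ x o
  have hpos : 0 < rexp (-π) / R := by positivity
  rw [← ENNReal.le_div_iff_mul_le (.inl (by simpa using hpos)) (.inl ENNReal.ofReal_ne_top),
    ← ENNReal.ofReal_div_of_pos hpos] at thickened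
  refine thickened.trans_eq (congrArg _ ?_)
  rw [neg_sub, Real.rpow_sub hR, Real.rpow_one, Real.rpow_natCast, inv_div, div_pow, Real.exp_neg]
  field_simp

end Sphere

section BandLimited

open Module (finrank)

lemma sq_lintegral_mul_le {α : Type*} [MeasurableSpace α] {μ : Measure α} {f g : α → ℝ≥0∞}
    (hf : AEMeasurable f μ) (hg : AEMeasurable g μ) :
    (∫⁻ x, f x * g x ∂μ) ^ 2 ≤ (∫⁻ x, f x ∂μ) * ∫⁻ x, f x * g x ^ 2 ∂μ := by
  have sqrt_sq (a : ℝ≥0∞) : (a ^ (1 / 2 : ℝ)) ^ 2 = a := by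
    rw [← ENNReal.rpow_mul_natCast]; norm_num
  have hölder := ENNReal.lintegral_mul_le_Lp_mul_Lq μ HolderConjugate.two_two
    (hf.pow_const (1 / 2 : ℝ)) ((hf.pow_const (1 / 2 : ℝ)).mul hg)
  simp only [Pi.mul_apply, ← mul_assoc, ← pow_two, ENNReal.rpow_two, mul_pow, sqrt_sq] at hölder
  refine (pow_le_pow_left₀ zero_le hölder 2).trans_eq ?_
  rw [mul_pow, sqrt_sq, sqrt_sq]

variable {E F : Type*} [NormedAddCommGroup E] [InnerProductSpace ℝ E] [FiniteDimensional ℝ E]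
  [MeasurableSpace E] [BorelSpace E] [NormedAddCommGroup F]

lemma fourier_gaussianBump {R : ℝ} (hR : 0 < R) (ξ : E) :
    𝓕 (fun y : E ↦ (gaussianBump R y : ℂ)) ξ =
      ((R⁻¹ ^ finrank ℝ E * gaussianBump R⁻¹ ξ : ℝ) : ℂ) := by
  have gaussian (y : E) :
      (gaussianBump R y : ℂ) = Complex.exp (-((π * R ^ 2 : ℝ) : ℂ) * ‖y‖ ^ 2) := by
    rw [gaussianBump]; push_cast; ring_nf
  have mass : ((π : ℂ) / ((π * R ^ 2 : ℝ) : ℂ)) ^ (finrank ℝ E / 2 : ℂ) =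
      ((R⁻¹ ^ finrank ℝ E : ℝ) : ℂ) := by
    rw [← Complex.ofReal_div, div_mul_cancel_left₀ pi_ne_zero, ← inv_pow,
      show (finrank ℝ E / 2 : ℂ) = ((finrank ℝ E / 2 : ℝ) : ℂ) by push_cast; rfl,
      ← Complex.ofReal_cpow (by positivity), ← Real.rpow_natCast, ← Real.rpow_mul (by positivity),
      ← Real.rpow_natCast]
    congr 2
    push_cast
    ring
  have exponent : -(π : ℂ) ^ 2 * ‖ξ‖ ^ 2 / ((π * R ^ 2 : ℝ) : ℂ) =
      ((-(π * (R⁻¹ * ‖ξ‖) ^ 2) : ℝ) : ℂ) := by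
    have : (π : ℂ) ≠ 0 := mod_cast pi_ne_zero
    have : (R : ℂ) ≠ 0 := mod_cast hR.ne'
    push_cast
    field_simp
  simp only [gaussian]
  rw [fourier_gaussian_innerProductSpace (by rw [Complex.ofReal_re]; positivity), mass, exponent,
    ← Complex.ofReal_exp, ← Complex.ofReal_mul, gaussianBump]

lemma fourier_gaussianBump_sub {R : ℝ} (hR : 0 < R) (x ξ : E) :
    𝓕 (fun y : E ↦ ((R ^ finrank ℝ E * gaussianBump R (x - y) : ℝ) : ℂ)) ξ =
      𝐞 (-inner ℝ ξ x) • (gaussianBump R⁻¹ ξ : ℂ) := by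
  have translate := congrFun (VectorFourier.fourierIntegral_comp_add_right 𝐞 volume (innerₗ E)
    (fun y ↦ (gaussianBump R y : ℂ)) (-x)) ξ
  have scale : (fun y : E ↦ ((R ^ finrank ℝ E * gaussianBump R (x - y) : ℝ) : ℂ)) =
      ((R ^ finrank ℝ E : ℝ) : ℂ) • ((fun y ↦ (gaussianBump R y : ℂ)) ∘ fun y ↦ y + -x) := by
    ext y
    simp only [gaussianBump_sub_comm R x y, Pi.smul_apply, Function.comp_apply, ← sub_eq_add_neg,
      Complex.ofReal_mul, smul_eq_mul]
  have dilation : ((R ^ finrank ℝ E : ℝ) : ℂ) * 𝓕 (fun y : E ↦ (gaussianBump R y : ℂ)) ξ =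
      gaussianBump R⁻¹ ξ := by
    rw [fourier_gaussianBump hR, ← Complex.ofReal_mul, ← mul_assoc, ← mul_pow,
      mul_inv_cancel₀ hR.ne', one_pow, one_mul]
  rw [scale, ← dilation, ← smul_eq_mul, smul_comm]
  refine (congrFun (VectorFourier.fourierIntegral_const_smul 𝐞 volume (innerₗ E) _ _) ξ).trans ?_
  rw [Pi.smul_apply, translate, innerₗ_apply_apply, inner_neg_left, real_inner_comm]
  rfl

lemma fourier_gaussianBump_smul [NormedSpace ℂ F] [CompleteSpace F] {R : ℝ} (hR : 0 < R)
    {k : E → F} (hk : Integrable k) (x : E) :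
    𝓕 (fun ξ ↦ (gaussianBump R⁻¹ ξ : ℂ) • k ξ) x =
      ∫ y, ((R ^ finrank ℝ E * gaussianBump R (x - y) : ℝ) : ℂ) • 𝓕 k y := by
  rw [integral_smul_fourier_eq _ hk, Real.fourier_eq]
  · refine integral_congr_ae (.of_forall fun ξ ↦ ?_)
    simp only [fourier_gaussianBump_sub hR, smul_assoc]
  · exact (((integrable_gaussianBump hR).comp_sub_left x).const_mul _).ofReal

variable [InnerProductSpace ℂ F] [CompleteSpace F] {μ : Measure E} [SFinite μ] {α K R : ℝ}

lemma enorm_fourier_gaussianBump_smul_sq_le (hR : 0 < R) {k : E → F} (hk : Integrable k) (x : E) :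
    ‖𝓕 (fun ξ ↦ (gaussianBump R⁻¹ ξ : ℂ) • k ξ) x‖ₑ ^ 2 ≤
      ∫⁻ y, ENNReal.ofReal (R ^ finrank ℝ E * gaussianBump R (x - y)) * ‖𝓕 k y‖ₑ ^ 2 := by
  have kernel_nonneg (y : E) : 0 ≤ R ^ finrank ℝ E * gaussianBump R (x - y) :=
    mul_nonneg (by positivity) (gaussianBump_pos _ _).le
  have kernel_mass : ∫⁻ y, ENNReal.ofReal (R ^ finrank ℝ E * gaussianBump R (x - y)) = 1 := by
    simp_rw [ENNReal.ofReal_mul (pow_pos hR _).le]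
    rw [lintegral_const_mul _ (by fun_prop), lintegral_gaussianBump_sub hR,
      ← ENNReal.ofReal_mul (by positivity), ← mul_pow, mul_inv_cancel₀ hR.ne', one_pow,
      ENNReal.ofReal_one]
  rw [fourier_gaussianBump_smul hR hk]
  calc _ ≤ (∫⁻ y, ENNReal.ofReal (R ^ finrank ℝ E * gaussianBump R (x - y)) * ‖𝓕 k y‖ₑ) ^ 2 := by
        gcongr
        refine (enorm_integral_le_lintegral_enorm _).trans_eq (lintegral_congr fun y ↦ ?_)
        rw [enorm_smul, ← ofReal_norm, Complex.norm_of_nonneg (kernel_nonneg y)]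
    _ ≤ _ := (sq_lintegral_mul_le (by fun_prop)
        (continuous_fourier hk).enorm.aemeasurable).trans_eq (by rw [kernel_mass, one_mul])

lemma HasGaussianGrowth.lintegral_fourier_gaussianBump_smul_le (hμ : HasGaussianGrowth μ α K)
    (hR : 0 < R) {k : E → F} (hk : Integrable k) (hk2 : MemLp k 2) :
    ∫⁻ x, ‖𝓕 (fun ξ ↦ (gaussianBump R⁻¹ ξ : ℂ) • k ξ) x‖ₑ ^ 2 ∂μ ≤
      ENNReal.ofReal (K * R ^ (finrank ℝ E - α)) * ∫⁻ ξ, ‖k ξ‖ₑ ^ 2 := by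
  have kernel_growth (y : E) :
      ∫⁻ x, ENNReal.ofReal (R ^ finrank ℝ E * gaussianBump R (x - y)) ∂μ ≤
        ENNReal.ofReal (K * R ^ (finrank ℝ E - α)) := by
    simp_rw [ENNReal.ofReal_mul (pow_pos hR _).le, gaussianBump_sub_comm R _ y]
    rw [lintegral_const_mul _ (by fun_prop)]
    refine (mul_le_mul_right (hμ R hR y) _).trans_eq ?_
    rw [← ENNReal.ofReal_mul (by positivity), sub_eq_add_neg, Real.rpow_add hR, Real.rpow_natCast]
    ring_nf
  have meas : Measurable fun y ↦ ‖𝓕 k y‖ₑ ^ 2 :=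
    (continuous_fourier hk).enorm.measurable.pow_const 2
  calc ∫⁻ x, ‖𝓕 (fun ξ ↦ (gaussianBump R⁻¹ ξ : ℂ) • k ξ) x‖ₑ ^ 2 ∂μ
      ≤ ∫⁻ x, (∫⁻ y,
          ENNReal.ofReal (R ^ finrank ℝ E * gaussianBump R (x - y)) * ‖𝓕 k y‖ₑ ^ 2) ∂μ :=
        lintegral_mono fun x ↦ enorm_fourier_gaussianBump_smul_sq_le hR hk x
    _ = ∫⁻ y, (∫⁻ x, ENNReal.ofReal (R ^ finrank ℝ E * gaussianBump R (x - y)) ∂μ) *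
          ‖𝓕 k y‖ₑ ^ 2 := by
        rw [lintegral_lintegral_swap ((by fun_prop : Measurable _).mul
          (meas.comp measurable_snd)).aemeasurable]
        refine lintegral_congr fun y ↦ ?_
        rw [lintegral_mul_const _ (by fun_prop)]
    _ ≤ ∫⁻ y, ENNReal.ofReal (K * R ^ (finrank ℝ E - α)) * ‖𝓕 k y‖ₑ ^ 2 :=
        lintegral_mono fun y ↦ mul_le_mul_left (kernel_growth y) _
    _ = _ := by rw [lintegral_const_mul _ meas, lintegral_enorm_fourier_sq hk hk2]

theorem HasGaussianGrowth.lintegral_fourier_le_of_support_subset (hμ : HasGaussianGrowth μ α K)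
    (hR : 0 < R) {k : E → F} (hk : Integrable k) (hk2 : MemLp k 2)
    (hsupp : Function.support k ⊆ Metric.closedBall 0 R) :
    ∫⁻ x, ‖𝓕 k x‖ₑ ^ 2 ∂μ ≤
      ENNReal.ofReal (rexp (2 * π) * K * R ^ (finrank ℝ E - α)) * ∫⁻ ξ, ‖k ξ‖ₑ ^ 2 := by
  let h (ξ : E) : F := (((gaussianBump R⁻¹ ξ)⁻¹ : ℝ) : ℂ) • k ξ
  have norm_h_le (ξ : E) : ‖h ξ‖ ≤ rexp π * ‖k ξ‖ := by
    by_cases hξ : ξ ∈ Function.support k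
    · rw [norm_smul, Complex.norm_of_nonneg (inv_nonneg.2 (gaussianBump_pos _ _).le)]
      gcongr
      exact inv_gaussianBump_inv_le hR (mem_closedBall_zero_iff.1 (hsupp hξ))
    · simp [h, Function.notMem_support.1 hξ]
  have h_meas : AEStronglyMeasurable h :=
    (Complex.continuous_ofReal.comp ((continuous_gaussianBump R⁻¹).inv₀
      fun ξ ↦ (gaussianBump_pos _ ξ).ne')).aestronglyMeasurable.smul hk.1
  have factor : k = fun ξ ↦ (gaussianBump R⁻¹ ξ : ℂ) • h ξ := by
    ext ξ
    rw [smul_smul, ← Complex.ofReal_mul, mul_inv_cancel₀ (gaussianBump_pos _ ξ).ne',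
      Complex.ofReal_one, one_smul]
  calc ∫⁻ x, ‖𝓕 k x‖ₑ ^ 2 ∂μ
      ≤ ENNReal.ofReal (K * R ^ (finrank ℝ E - α)) * ∫⁻ ξ, ‖h ξ‖ₑ ^ 2 := by
        rw [factor]
        exact hμ.lintegral_fourier_gaussianBump_smul_le hR
          ((hk.norm.const_mul _).mono' h_meas (.of_forall norm_h_le))
          (hk2.of_le_mul h_meas (.of_forall norm_h_le))
    _ ≤ ENNReal.ofReal (K * R ^ (finrank ℝ E - α)) *
          ∫⁻ ξ, ENNReal.ofReal (rexp (2 * π)) * ‖k ξ‖ₑ ^ 2 := by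
        gcongr with ξ
        rw [two_mul, Real.exp_add, ← pow_two, ENNReal.ofReal_pow (exp_pos _).le, ← mul_pow]
        gcongr
        rw [← ofReal_norm, ← ofReal_norm, ← ENNReal.ofReal_mul (exp_pos _).le]
        exact ENNReal.ofReal_le_ofReal (norm_h_le ξ)
    _ = _ := by
        rw [lintegral_const_mul' _ _ ENNReal.ofReal_ne_top, ← mul_assoc,
          mul_comm (ENNReal.ofReal _), ← ENNReal.ofReal_mul (exp_pos _).le, mul_assoc (rexp _)]

end BandLimited

section ExponentialInterpolation

open Set (Iic Ioi)

lemma lintegral_exp_mul_Iic {a : ℝ} (ha : 0 < a) (T : ℝ) :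
    ∫⁻ u in Iic T, ENNReal.ofReal (rexp (a * u)) = ENNReal.ofReal (rexp (a * T) / a) := by
  rw [← ofReal_integral_eq_lintegral_ofReal (integrableOn_exp_mul_Iic ha T)
    (.of_forall fun u ↦ (exp_pos _).le), integral_exp_mul_Iic ha]

lemma lintegral_exp_mul_Ioi {a : ℝ} (ha : a < 0) (T : ℝ) :
    ∫⁻ u in Ioi T, ENNReal.ofReal (rexp (a * u)) = ENNReal.ofReal (-rexp (a * T) / a) := by
  rw [← ofReal_integral_eq_lintegral_ofReal (integrableOn_exp_mul_Ioi ha T)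
    (.of_forall fun u ↦ (exp_pos _).le), integral_exp_mul_Ioi ha]

lemma sq_lintegral_le_mul_lintegral_exp (μ : Measure ℝ) {F : ℝ → ℝ≥0∞} (hF : Measurable F)
    (c : ℝ) :
    (∫⁻ u, F u ∂μ) ^ 2 ≤
      (∫⁻ u, ENNReal.ofReal (rexp (c * u)) ∂μ) *
        ∫⁻ u, ENNReal.ofReal (rexp (-c * u)) * F u ^ 2 ∂μ := by
  have cancel (u : ℝ) : ENNReal.ofReal (rexp (c * u)) * ENNReal.ofReal (rexp (-c * u)) = 1 := by
    rw [← ENNReal.ofReal_mul (exp_pos _).le, ← Real.exp_add]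
    simp
  convert sq_lintegral_mul_le (μ := μ) (f := fun u ↦ ENNReal.ofReal (rexp (c * u)))
    (g := fun u ↦ ENNReal.ofReal (rexp (-c * u)) * F u) (by fun_prop) (by fun_prop) using 4 with u u
  · rw [← mul_assoc, cancel, one_mul]
  · rw [mul_pow, pow_two (ENNReal.ofReal _), ← mul_assoc, ← mul_assoc, cancel, one_mul]

variable {a β : ℝ} {D : ℝ≥0∞} {F : ℝ → ℝ≥0∞}

lemma sq_lintegral_le_of_split (ha : 0 < a) (hβ : 0 < β) (hF : Measurable F)
    (hFD : ∀ u, F u ^ 2 ≤ D * ENNReal.ofReal (rexp (a * u))) (T : ℝ) :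
    (∫⁻ u, F u) ^ 2 ≤ 2 * (D * ENNReal.ofReal ((2 / a) ^ 2 * rexp (a * T)) +
      (∫⁻ u, ENNReal.ofReal (rexp (β * u)) * F u ^ 2) * ENNReal.ofReal (rexp (-β * T) / β)) := by
  have low : (∫⁻ u in Iic T, F u) ^ 2 ≤ D * ENNReal.ofReal ((2 / a) ^ 2 * rexp (a * T)) := by
    have half (u : ℝ) : ENNReal.ofReal (rexp (-(a / 2) * u)) * F u ^ 2 ≤
        D * ENNReal.ofReal (rexp (a / 2 * u)) := by
      refine (mul_le_mul_right (hFD u) _).trans_eq ?_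
      rw [mul_left_comm, ← ENNReal.ofReal_mul (exp_pos _).le, ← Real.exp_add]
      ring_nf
    refine (sq_lintegral_le_mul_lintegral_exp _ hF (a / 2)).trans <|
      (mul_le_mul_right (lintegral_mono half) _).trans_eq ?_
    rw [lintegral_const_mul _ (by fun_prop), lintegral_exp_mul_Iic (half_pos ha), mul_left_comm,
      ← ENNReal.ofReal_mul (by positivity), show a * T = a / 2 * T + a / 2 * T by ring,
      Real.exp_add]
    congr 2
    field_simp
  have high : (∫⁻ u in Ioi T, F u) ^ 2 ≤
      (∫⁻ u, ENNReal.ofReal (rexp (β * u)) * F u ^ 2) * ENNReal.ofReal (rexp (-β * T) / β) := by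
    refine (sq_lintegral_le_mul_lintegral_exp _ hF (-β)).trans ?_
    rw [lintegral_exp_mul_Ioi (neg_neg_of_pos hβ), neg_div_neg_eq, neg_neg, mul_comm]
    exact mul_le_mul_left (setLIntegral_le_lintegral _ _) _
  calc (∫⁻ u, F u) ^ 2 = ((∫⁻ u in Iic T, F u) + ∫⁻ u in Ioi T, F u) ^ 2 := by
        rw [← Set.compl_Iic, lintegral_add_compl F measurableSet_Iic]
    _ ≤ 2 * ((∫⁻ u in Iic T, F u) ^ 2 + (∫⁻ u in Ioi T, F u) ^ 2) := by
        have := ENNReal.rpow_add_le_mul_rpow_add_rpow (∫⁻ u in Iic T, F u) (∫⁻ u in Ioi T, F u)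
          one_le_two
        norm_num at this
        exact this
    _ ≤ _ := by gcongr

lemma exists_eq_ofReal_exp {c : ℝ≥0∞} (h0 : c ≠ 0) (htop : c ≠ ⊤) :
    ∃ x, c = ENNReal.ofReal (rexp x) :=
  ⟨Real.log c.toReal, by rw [exp_log (toReal_pos h0 htop), ofReal_toReal htop]⟩

lemma exists_mul_exp_eq_rpow_mul_rpow {G : ℝ≥0∞} (ha : 0 < a) (hβ : 0 < β) (hD0 : D ≠ 0)
    (hD : D ≠ ⊤) (hG0 : G ≠ 0) (hG : G ≠ ⊤) :
    ∃ T, D * ENNReal.ofReal (rexp (a * T)) = D ^ (β / (a + β)) * G ^ (a / (a + β)) ∧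
      G * ENNReal.ofReal (rexp (-β * T)) = D ^ (β / (a + β)) * G ^ (a / (a + β)) := by
  obtain ⟨x, rfl⟩ := exists_eq_ofReal_exp hD0 hD
  obtain ⟨y, rfl⟩ := exists_eq_ofReal_exp hG0 hG
  refine ⟨(y - x) / (a + β), ?_, ?_⟩ <;>
  · rw [ENNReal.ofReal_rpow_of_pos (exp_pos x), ENNReal.ofReal_rpow_of_pos (exp_pos y),
      ← ENNReal.ofReal_mul (by positivity), ← ENNReal.ofReal_mul (by positivity),
      ← Real.exp_mul, ← Real.exp_mul, ← Real.exp_add, ← Real.exp_add]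
    congr 2
    field_simp
    ring

theorem sq_lintegral_le_rpow_mul_rpow (ha : 0 < a) (hβ : 0 < β) (hF : Measurable F)
    (hFD : ∀ u, F u ^ 2 ≤ D * ENNReal.ofReal (rexp (a * u))) :
    (∫⁻ u, F u) ^ 2 ≤ ENNReal.ofReal (2 * ((2 / a) ^ 2 + 1 / β)) * (D ^ (β / (a + β)) *
      (∫⁻ u, ENNReal.ofReal (rexp (β * u)) * F u ^ 2) ^ (a / (a + β))) := by
  set G := ∫⁻ u, ENNReal.ofReal (rexp (β * u)) * F u ^ 2 with hG
  have hC : ENNReal.ofReal (2 * ((2 / a) ^ 2 + 1 / β)) ≠ 0 := by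
    rw [Ne, ENNReal.ofReal_eq_zero, not_le]; positivity
  by_cases hzero : D = 0 ∨ G = 0
  · have hF0 : F =ᵐ[volume] 0 := by
      rcases hzero with rfl | hG0
      · exact .of_forall fun u ↦ by simpa using hFD u
      · rw [hG, lintegral_eq_zero_iff (by fun_prop)] at hG0
        filter_upwards [hG0] with u hu
        simpa [(exp_pos _).not_ge] using hu
    simp [lintegral_congr_ae hF0]
  obtain ⟨hD0, hG0⟩ := not_or.1 hzero
  by_cases htop : D = ⊤ ∨ G = ⊤
  · refine le_top.trans_eq (Eq.symm ?_)
    have rpow_ne_zero {c : ℝ≥0∞} {t : ℝ} (hc : c ≠ 0) (ht : 0 < t) : c ^ t ≠ 0 := by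
      simp [hc, ht.le.not_gt]
    rcases htop with h | h
    · rw [h, ENNReal.top_rpow_of_pos (by positivity),
        ENNReal.top_mul (rpow_ne_zero hG0 (by positivity)), ENNReal.mul_top hC]
    · rw [h, ENNReal.top_rpow_of_pos (by positivity),
        ENNReal.mul_top (rpow_ne_zero hD0 (by positivity)), ENNReal.mul_top hC]
  obtain ⟨hD, hG'⟩ := not_or.1 htop
  obtain ⟨T, hDT, hGT⟩ := exists_mul_exp_eq_rpow_mul_rpow ha hβ hD0 hD hG0 hG'
  refine (sq_lintegral_le_of_split ha hβ hF hFD T).trans_eq ?_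
  rw [← hG, div_eq_inv_mul _ β, ENNReal.ofReal_mul (by positivity),
    ENNReal.ofReal_mul (by positivity), mul_left_comm D, hDT, mul_left_comm G, hGT, ← add_mul,
    ← ENNReal.ofReal_add (by positivity) (by positivity), ← mul_assoc, one_div,
    ENNReal.ofReal_mul zero_le_two, ENNReal.ofReal_ofNat]

end ExponentialInterpolation

section FrequencyShells

open Set (Ico)
open Module (finrank)

variable {E F : Type*} [NormedAddCommGroup E] [NormedAddCommGroup F]

/-- The frequency shell `e ^ (u - 1) < ‖ξ‖ ≤ e ^ u`. The parameter `u` is continuous: integrating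
over `u` replaces the summation over dyadic shells, and every `ξ ≠ 0` lies in the shells of an
interval of parameters of length one. -/
def logShell (u : ℝ) : Set E := {ξ | rexp (u - 1) < ‖ξ‖ ∧ ‖ξ‖ ≤ rexp u}

lemma mem_logShell_iff {ξ : E} (hξ : ξ ≠ 0) {u : ℝ} :
    ξ ∈ logShell u ↔ u ∈ Ico (Real.log ‖ξ‖) (Real.log ‖ξ‖ + 1) := by
  rw [logShell, Set.mem_ofPred_eq, ← Real.lt_log_iff_exp_lt (norm_pos_iff.2 hξ),
    ← Real.log_le_iff_le_exp (norm_pos_iff.2 hξ), Set.mem_Ico, sub_lt_iff_lt_add, and_comm]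

lemma indicator_logShell_apply {M : Type*} [Zero M] (f : E → M) {ξ : E} (hξ : ξ ≠ 0) (u : ℝ) :
    (logShell u).indicator f ξ =
      (Ico (Real.log ‖ξ‖) (Real.log ‖ξ‖ + 1)).indicator (fun _ ↦ f ξ) u := by
  classical simp only [Set.indicator_apply, mem_logShell_iff hξ]

lemma logShell_subset_closedBall (u : ℝ) :
    (logShell u : Set E) ⊆ Metric.closedBall 0 (rexp u) :=
  fun _ hξ ↦ mem_closedBall_zero_iff.2 hξ.2

lemma ofReal_exp_le_enorm_rpow_of_mem_logShell {s : ℝ} (hs : 0 ≤ s) {u : ℝ} {ξ : E}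
    (hξ : ξ ∈ logShell u) :
    ENNReal.ofReal (rexp (2 * s * u)) ≤ ENNReal.ofReal (rexp (2 * s)) * ‖ξ‖ₑ ^ (2 * s) := by
  calc ENNReal.ofReal (rexp (2 * s * u))
      = ENNReal.ofReal (rexp (2 * s)) * ENNReal.ofReal (rexp (u - 1)) ^ (2 * s) := by
        rw [ENNReal.ofReal_rpow_of_pos (exp_pos _), ← ENNReal.ofReal_mul (exp_pos _).le,
          ← Real.exp_mul, ← Real.exp_add]
        ring_nf
    _ ≤ ENNReal.ofReal (rexp (2 * s)) * ‖ξ‖ₑ ^ (2 * s) := by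
        rw [← ofReal_norm]
        gcongr
        exact hξ.1.le

variable [MeasurableSpace E] [BorelSpace E]

lemma measurableSet_setOf_mem_logShell :
    MeasurableSet {q : E × ℝ | q.1 ∈ logShell q.2} :=
  (measurableSet_lt (f := fun q : E × ℝ ↦ rexp (q.2 - 1)) (by fun_prop) (by fun_prop)).inter
    (measurableSet_le (g := fun q : E × ℝ ↦ rexp q.2) (by fun_prop) (by fun_prop))

lemma measurableSet_logShell (u : ℝ) : MeasurableSet (logShell u : Set E) :=
  measurableSet_setOf_mem_logShell.preimage (measurable_id.prodMk measurable_const)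

variable {μ : Measure E} [SFinite μ] [NullSingletonClass μ]

lemma lintegral_lintegral_logShell {f : E → ℝ≥0∞} (hf : AEMeasurable f μ) :
    ∫⁻ u : ℝ, (∫⁻ ξ in logShell u, f ξ ∂μ) = ∫⁻ ξ, f ξ ∂μ := by
  calc ∫⁻ u : ℝ, (∫⁻ ξ in logShell u, f ξ ∂μ)
      = ∫⁻ u : ℝ, (∫⁻ ξ, (logShell u).indicator f ξ ∂μ) := by
        simp only [lintegral_indicator (measurableSet_logShell _)]
    _ = ∫⁻ ξ, (∫⁻ u : ℝ, (logShell u).indicator f ξ) ∂μ := by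
        refine (lintegral_lintegral_swap ?_).symm
        exact (hf.comp_fst.indicator measurableSet_setOf_mem_logShell).congr
          (.of_forall fun _ ↦ rfl)
    _ = ∫⁻ ξ, f ξ ∂μ := by
        refine lintegral_congr_ae ?_
        filter_upwards [μ.ae_ne 0] with ξ hξ
        simp [indicator_logShell_apply f hξ]

lemma integral_integral_logShell [NormedSpace ℝ F] [CompleteSpace F] {g : E → F}
    (hg : Integrable g μ) :
    ∫ u : ℝ, (∫ ξ in logShell u, g ξ ∂μ) = ∫ ξ, g ξ ∂μ := by
  have integrable_indicator :
      Integrable (fun q : E × ℝ ↦ (logShell q.2).indicator g q.1) (μ.prod volume) := by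
    have meas : AEStronglyMeasurable (fun q : E × ℝ ↦ (logShell q.2).indicator g q.1)
        (μ.prod volume) := hg.1.comp_fst.indicator measurableSet_setOf_mem_logShell
    refine (integrable_prod_iff meas).2 ⟨?_, hg.norm.congr ?_⟩
    · filter_upwards [μ.ae_ne 0] with ξ hξ
      exact ((integrableOn_const measure_Ico_lt_top.ne).integrable_indicator
        measurableSet_Ico).congr (.of_forall fun u ↦ (indicator_logShell_apply g hξ u).symm)
    · filter_upwards [μ.ae_ne 0] with ξ hξ
      simp [indicator_logShell_apply g hξ, integral_indicator measurableSet_Ico,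
        norm_indicator_eq_indicator_norm]
  calc ∫ u : ℝ, (∫ ξ in logShell u, g ξ ∂μ) = ∫ u : ℝ, (∫ ξ, (logShell u).indicator g ξ ∂μ) := by
        simp only [integral_indicator (measurableSet_logShell _)]
    _ = ∫ ξ, (∫ u : ℝ, (logShell u).indicator g ξ) ∂μ :=
        (integral_integral_swap integrable_indicator).symm
    _ = ∫ ξ, g ξ ∂μ := by
        refine integral_congr_ae ?_
        filter_upwards [μ.ae_ne 0] with ξ hξ
        simp [indicator_logShell_apply g hξ, integral_indicator measurableSet_Ico]

variable [InnerProductSpace ℝ E] [FiniteDimensional ℝ E]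

/-- The homogeneous Sobolev energy `∫ ‖ξ‖ ^ (2 * s) * ‖w ξ‖ ^ 2` of a function given on the
frequency side; for `w = 𝓕 v` it is the square of the `L²` norm of `|D| ^ s v`. -/
noncomputable def sobolevEnergy (s : ℝ) (w : E → F) : ℝ≥0∞ :=
  ∫⁻ ξ, ‖ξ‖ₑ ^ (2 * s) * ‖w ξ‖ₑ ^ 2

variable {s : ℝ}

lemma exp_mul_setLIntegral_logShell_le (hs : 0 ≤ s) (w : E → F) (u : ℝ) :
    ENNReal.ofReal (rexp (2 * s * u)) * ∫⁻ ξ in logShell u, ‖w ξ‖ₑ ^ 2 ≤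
      ENNReal.ofReal (rexp (2 * s)) * ∫⁻ ξ in logShell u, ‖ξ‖ₑ ^ (2 * s) * ‖w ξ‖ₑ ^ 2 := by
  rw [← lintegral_const_mul' _ _ ENNReal.ofReal_ne_top,
    ← lintegral_const_mul' _ _ ENNReal.ofReal_ne_top]
  refine setLIntegral_mono_ae' (measurableSet_logShell u) (.of_forall fun ξ hξ ↦ ?_)
  rw [← mul_assoc]
  exact mul_le_mul_left (ofReal_exp_le_enorm_rpow_of_mem_logShell hs hξ) _

lemma lintegral_exp_mul_setLIntegral_logShell_le [Nontrivial E] (hs : 0 ≤ s) {w : E → F}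
    (hw : AEStronglyMeasurable w) :
    ∫⁻ u : ℝ, ENNReal.ofReal (rexp (2 * s * u)) * (∫⁻ ξ in logShell u, ‖w ξ‖ₑ ^ 2) ≤
      ENNReal.ofReal (rexp (2 * s)) * sobolevEnergy s w := by
  refine (lintegral_mono fun u ↦ exp_mul_setLIntegral_logShell_le hs w u).trans_eq ?_
  rw [lintegral_const_mul' _ _ ENNReal.ofReal_ne_top, lintegral_lintegral_logShell (by fun_prop),
    sobolevEnergy]

lemma setLIntegral_logShell_le (hs : 0 ≤ s) (w : E → F) (u : ℝ) :
    ∫⁻ ξ in logShell u, ‖w ξ‖ₑ ^ 2 ≤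
      ENNReal.ofReal (rexp (2 * s * (1 - u))) * sobolevEnergy s w := by
  have weighted := (exp_mul_setLIntegral_logShell_le hs w u).trans
    (mul_le_mul_right (setLIntegral_le_lintegral _ _) _)
  have unit : ENNReal.ofReal (rexp (-(2 * s * u))) * ENNReal.ofReal (rexp (2 * s * u)) = 1 := by
    rw [← ENNReal.ofReal_mul (exp_pos _).le, ← Real.exp_add]
    simp
  calc ∫⁻ ξ in logShell u, ‖w ξ‖ₑ ^ 2
      = ENNReal.ofReal (rexp (-(2 * s * u))) *
          (ENNReal.ofReal (rexp (2 * s * u)) * ∫⁻ ξ in logShell u, ‖w ξ‖ₑ ^ 2) := by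
        rw [← mul_assoc, unit, one_mul]
    _ ≤ ENNReal.ofReal (rexp (-(2 * s * u))) *
          (ENNReal.ofReal (rexp (2 * s)) * sobolevEnergy s w) := mul_le_mul_right weighted _
    _ = _ := by
        rw [← mul_assoc, ← ENNReal.ofReal_mul (exp_pos _).le, ← Real.exp_add]
        ring_nf

lemma memLp_indicator_logShell (hs : 0 ≤ s) {w : E → F} (hw : AEStronglyMeasurable w)
    (hE : sobolevEnergy s w ≠ ⊤) (u : ℝ) : MemLp ((logShell u).indicator w) 2 := by
  refine (memLp_indicator_iff_restrict (measurableSet_logShell u)).2 ⟨hw.restrict, ?_⟩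
  have := (setLIntegral_logShell_le hs w u).trans_lt
    (ENNReal.mul_lt_top ENNReal.ofReal_lt_top hE.lt_top)
  rwa [← eLpNorm_two_sq, ENNReal.pow_lt_top_iff, or_iff_left two_ne_zero] at this

variable [NormedSpace ℂ F]

lemma fourier_indicator_eq {S : Set E} (hS : MeasurableSet S) (w : E → F) (x : E) :
    𝓕 (S.indicator w) x = ∫ ξ in S, 𝐞 (-inner ℝ ξ x) • w ξ := by
  rw [Real.fourier_eq, ← integral_indicator hS, Set.indicator_smul]

lemma enorm_fourier_le_lintegral_logShell [Nontrivial E] [CompleteSpace F] {w : E → F}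
    (hw : Integrable w) (x : E) :
    ‖𝓕 w x‖ₑ ≤ ∫⁻ u : ℝ, ‖𝓕 ((logShell u).indicator w) x‖ₑ := by
  have integrable_phase_smul : Integrable fun ξ ↦ 𝐞 (-inner ℝ ξ x) • w ξ :=
    (Real.fourierIntegral_convergent_iff x).2 hw
  simp only [fourier_indicator_eq (measurableSet_logShell _)]
  rw [Real.fourier_eq, ← integral_integral_logShell integrable_phase_smul]
  exact enorm_integral_le_lintegral_enorm _

lemma stronglyMeasurable_fourier_indicator_logShell {w : E → F}
    (hw : AEStronglyMeasurable w) :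
    StronglyMeasurable fun q : E × ℝ ↦ 𝓕 ((logShell q.2).indicator w) q.1 := by
  have fourier_mk (q : E × ℝ) : 𝓕 ((logShell q.2).indicator w) q.1 =
      ∫ ξ, 𝐞 (-inner ℝ ξ q.1) • (logShell q.2).indicator (hw.mk w) ξ := by
    rw [← Real.fourier_eq]
    exact Real.fourier_congr_ae
      (indicator_eventuallyEq (hw.ae_eq_mk.filter_mono inf_le_left) .rfl) _
  simp only [fourier_mk]
  refine StronglyMeasurable.integral_prod_right (.smul ?_ ?_)
  · exact (continuous_subtype_val.comp (continuous_fourierChar.comp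
      (f := fun q : (E × ℝ) × E ↦ -inner ℝ q.2 q.1.1) (by fun_prop))).stronglyMeasurable
  · exact (hw.stronglyMeasurable_mk.comp_measurable measurable_snd).indicator
      (measurableSet_setOf_mem_logShell.preimage
        (measurable_snd.prodMk (measurable_snd.comp measurable_fst)))

lemma enorm_fourier_indicator_logShell_sq_le (hs : 0 ≤ s) {w : E → F}
    (hw : AEStronglyMeasurable w) (u : ℝ) (x : E) :
    ‖𝓕 ((logShell u).indicator w) x‖ₑ ^ 2 ≤
      ENNReal.ofReal (rexp (2 * s)) * volume (Metric.ball (0 : E) 1) * sobolevEnergy s w *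
        ENNReal.ofReal (rexp ((finrank ℝ E - 2 * s) * u)) := by
  have exponents : ENNReal.ofReal (rexp u ^ finrank ℝ E) *
      ENNReal.ofReal (rexp (2 * s * (1 - u))) =
        ENNReal.ofReal (rexp (2 * s)) * ENNReal.ofReal (rexp ((finrank ℝ E - 2 * s) * u)) := by
    rw [← ENNReal.ofReal_mul (by positivity), ← ENNReal.ofReal_mul (by positivity),
      ← Real.exp_nat_mul, ← Real.exp_add, ← Real.exp_add]
    ring_nf
  rw [fourier_indicator_eq (measurableSet_logShell u)]
  calc _ ≤ (∫⁻ ξ in logShell u, 1 * ‖w ξ‖ₑ) ^ 2 := by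
        gcongr
        refine (enorm_integral_le_lintegral_enorm _).trans_eq (lintegral_congr fun ξ ↦ ?_)
        rw [one_mul, ← ofReal_norm, ← ofReal_norm, Circle.norm_smul]
    _ ≤ volume (logShell u : Set E) * ∫⁻ ξ in logShell u, ‖w ξ‖ₑ ^ 2 := by
        refine (sq_lintegral_mul_le aemeasurable_const hw.restrict.enorm).trans_eq ?_
        simp only [setLIntegral_one, one_mul]
    _ ≤ (ENNReal.ofReal (rexp u ^ finrank ℝ E) * volume (Metric.ball (0 : E) 1)) *
          (ENNReal.ofReal (rexp (2 * s * (1 - u))) * sobolevEnergy s w) := by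
        refine mul_le_mul' ?_ (setLIntegral_logShell_le hs w u)
        rw [← Measure.addHaar_closedBall _ _ (exp_pos u).le]
        exact measure_mono (logShell_subset_closedBall u)
    _ = _ := by
        rw [mul_mul_mul_comm, exponents]
        ring

end FrequencyShells

section TraceInequality

open Module (finrank)

variable {E F : Type*} [NormedAddCommGroup E] [InnerProductSpace ℝ E] [FiniteDimensional ℝ E]
  [MeasurableSpace E] [BorelSpace E] [NormedAddCommGroup F] [InnerProductSpace ℂ F]
  [CompleteSpace F] {μ : Measure E} [SFinite μ] {s α K : ℝ}

lemma HasGaussianGrowth.exp_mul_lintegral_fourier_indicator_logShell_le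
    (hμ : HasGaussianGrowth μ α K) (hs : 0 ≤ s) {w : E → F} (hw : Integrable w)
    (hE : sobolevEnergy s w ≠ ⊤) (u : ℝ) :
    ENNReal.ofReal (rexp ((2 * s - finrank ℝ E + α) * u)) *
        ∫⁻ x, ‖𝓕 ((logShell u).indicator w) x‖ₑ ^ 2 ∂μ ≤
      ENNReal.ofReal (rexp (2 * π) * K) *
        (ENNReal.ofReal (rexp (2 * s * u)) * ∫⁻ ξ in logShell u, ‖w ξ‖ₑ ^ 2) := by
  have exponents : rexp ((2 * s - finrank ℝ E + α) * u) *
      (rexp (2 * π) * K * rexp u ^ (finrank ℝ E - α)) =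
        rexp (2 * π) * K * rexp (2 * s * u) := by
    rw [← Real.exp_mul, mul_left_comm, ← Real.exp_add]
    ring_nf
  refine (mul_le_mul_right (hμ.lintegral_fourier_le_of_support_subset (exp_pos u)
    (hw.indicator (measurableSet_logShell u)) (memLp_indicator_logShell hs hw.1 hE u)
    (Set.support_indicator_subset.trans (logShell_subset_closedBall u))) _).trans_eq ?_
  rw [← mul_assoc, ← ENNReal.ofReal_mul (exp_pos _).le, exponents,
    ENNReal.ofReal_mul' (exp_pos _).le, mul_assoc, ← lintegral_indicator (measurableSet_logShell u)]
  simp only [enorm_indicator_eq_indicator_enorm, sq, ← Set.indicator_mul]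

lemma HasGaussianGrowth.lintegral_lintegral_fourier_indicator_logShell_le [Nontrivial E]
    (hμ : HasGaussianGrowth μ α K) (hs : 0 ≤ s) {w : E → F} (hw : Integrable w)
    (hE : sobolevEnergy s w ≠ ⊤) :
    ∫⁻ x, (∫⁻ u : ℝ, ENNReal.ofReal (rexp ((2 * s - finrank ℝ E + α) * u)) *
        ‖𝓕 ((logShell u).indicator w) x‖ₑ ^ 2) ∂μ ≤
      ENNReal.ofReal (rexp (2 * π) * K) * (ENNReal.ofReal (rexp (2 * s)) * sobolevEnergy s w) := by
  have meas := (stronglyMeasurable_fourier_indicator_logShell hw.1).enorm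
  rw [lintegral_lintegral_swap (by fun_prop)]
  calc ∫⁻ u : ℝ, (∫⁻ x, ENNReal.ofReal (rexp ((2 * s - finrank ℝ E + α) * u)) *
        ‖𝓕 ((logShell u).indicator w) x‖ₑ ^ 2 ∂μ)
      ≤ ∫⁻ u : ℝ, ENNReal.ofReal (rexp (2 * π) * K) *
          (ENNReal.ofReal (rexp (2 * s * u)) * ∫⁻ ξ in logShell u, ‖w ξ‖ₑ ^ 2) := by
        refine lintegral_mono fun u ↦ ?_
        rw [lintegral_const_mul' _ _ ENNReal.ofReal_ne_top]
        exact hμ.exp_mul_lintegral_fourier_indicator_logShell_le hs hw hE u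
    _ ≤ _ := by
        rw [lintegral_const_mul' _ _ ENNReal.ofReal_ne_top]
        gcongr
        exact lintegral_exp_mul_setLIntegral_logShell_le hs hw.1

lemma enorm_fourier_sq_le [Nontrivial E] (hs : 0 ≤ s) (hα : finrank ℝ E - α < 2 * s)
    (hsE : 2 * s < finrank ℝ E) {w : E → F} (hw : Integrable w) (x : E) :
    ‖𝓕 w x‖ₑ ^ 2 ≤
      ENNReal.ofReal (2 * ((2 / (finrank ℝ E - 2 * s)) ^ 2 + 1 / (2 * s - finrank ℝ E + α))) *
        ((ENNReal.ofReal (rexp (2 * s)) * volume (Metric.ball (0 : E) 1) * sobolevEnergy s w) ^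
            ((2 * s - finrank ℝ E + α) / α) *
          (∫⁻ u : ℝ, ENNReal.ofReal (rexp ((2 * s - finrank ℝ E + α) * u)) *
            ‖𝓕 ((logShell u).indicator w) x‖ₑ ^ 2) ^ ((finrank ℝ E - 2 * s) / α)) := by
  have meas : Measurable fun u : ℝ ↦ ‖𝓕 ((logShell u).indicator w) x‖ₑ :=
    ((stronglyMeasurable_fourier_indicator_logShell hw.1).comp_measurable
      (measurable_prodMk_left (x := x))).enorm
  have interpolation := sq_lintegral_le_rpow_mul_rpow (a := finrank ℝ E - 2 * s)
    (β := 2 * s - finrank ℝ E + α) (by linarith) (by linarith) meas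
    fun u ↦ enorm_fourier_indicator_logShell_sq_le hs hw.1 u x
  rw [show finrank ℝ E - 2 * s + (2 * s - finrank ℝ E + α) = α by ring] at interpolation
  exact (pow_le_pow_left' (enorm_fourier_le_lintegral_logShell hw x) 2).trans interpolation

lemma exists_enorm_fourier_rpow_le [Nontrivial E] (hs : 0 ≤ s) (hα : finrank ℝ E - α < 2 * s)
    (hsE : 2 * s < finrank ℝ E) :
    ∃ C : ℝ≥0∞, C ≠ ⊤ ∧ ∀ w : E → F, Integrable w → ∀ x,
      ‖𝓕 w x‖ₑ ^ (2 * α / (finrank ℝ E - 2 * s)) ≤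
        C * sobolevEnergy s w ^ ((2 * s - finrank ℝ E + α) / (finrank ℝ E - 2 * s)) *
          ∫⁻ u : ℝ, ENNReal.ofReal (rexp ((2 * s - finrank ℝ E + α) * u)) *
            ‖𝓕 ((logShell u).indicator w) x‖ₑ ^ 2 := by
  have ha : 0 < finrank ℝ E - 2 * s := by linarith
  have hβ : 0 < 2 * s - finrank ℝ E + α := by linarith
  have hα0 : 0 < α := by linarith
  have hq : 0 ≤ α / (finrank ℝ E - 2 * s) := by positivity
  have rpow_rpow_div (t : ℝ≥0∞) (b : ℝ) :
      (t ^ (b / α)) ^ (α / (finrank ℝ E - 2 * s)) = t ^ (b / (finrank ℝ E - 2 * s)) := by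
    rw [← ENNReal.rpow_mul, div_mul_div_cancel₀ hα0.ne']
  have hd : ENNReal.ofReal (rexp (2 * s)) * volume (Metric.ball (0 : E) 1) ≠ ⊤ :=
    ENNReal.mul_ne_top ENNReal.ofReal_ne_top measure_ball_lt_top.ne
  refine ⟨_, ENNReal.mul_ne_top (ENNReal.rpow_ne_top_of_nonneg hq (ENNReal.ofReal_ne_top
      (r := 2 * ((2 / (finrank ℝ E - 2 * s)) ^ 2 + 1 / (2 * s - finrank ℝ E + α)))))
    (ENNReal.rpow_ne_top_of_nonneg (div_pos hβ ha).le hd), fun w hw x ↦ ?_⟩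
  rw [mul_div_assoc, ENNReal.rpow_mul, ENNReal.rpow_two]
  refine (ENNReal.rpow_le_rpow (enorm_fourier_sq_le hs hα hsE hw x) hq).trans_eq ?_
  rw [ENNReal.mul_rpow_of_nonneg _ _ hq, ENNReal.mul_rpow_of_nonneg _ _ hq, rpow_rpow_div,
    rpow_rpow_div, div_self ha.ne', ENNReal.rpow_one,
    ENNReal.mul_rpow_of_nonneg _ _ (div_pos hβ ha).le, ← mul_assoc, ← mul_assoc]

theorem exists_lintegral_fourier_rpow_le (K : ℝ) (hs : 0 ≤ s) (hα : finrank ℝ E - α < 2 * s)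
    (hsE : 2 * s < finrank ℝ E) :
    ∃ C : ℝ≥0∞, C ≠ ⊤ ∧ ∀ (μ : Measure E) [SFinite μ], HasGaussianGrowth μ α K →
      ∀ w : E → F, Integrable w →
        ∫⁻ x, ‖𝓕 w x‖ₑ ^ (2 * α / (finrank ℝ E - 2 * s)) ∂μ ≤
          C * sobolevEnergy s w ^ (α / (finrank ℝ E - 2 * s)) := by
  have : Nontrivial E := Module.nontrivial_of_finrank_pos (R := ℝ) <| by
    exact_mod_cast (mul_nonneg zero_le_two hs).trans_lt hsE
  obtain ⟨C, hC, pointwise⟩ := exists_enorm_fourier_rpow_le (F := F) hs hα hsE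
  have ha : 0 < finrank ℝ E - 2 * s := sub_pos.2 hsE
  refine ⟨(C + 1) * (ENNReal.ofReal (rexp (2 * π) * K) * ENNReal.ofReal (rexp (2 * s)) + 1),
    by finiteness, fun μ _ hμ w hw ↦ ?_⟩
  rcases eq_or_ne (sobolevEnergy s w) ⊤ with hE | hE
  · rw [hE, ENNReal.top_rpow_of_pos (div_pos (by linarith) ha), ENNReal.mul_top (by simp)]
    exact le_top
  have exponents : (2 * s - finrank ℝ E + α) / (finrank ℝ E - 2 * s) + 1 =
      α / (finrank ℝ E - 2 * s) := by
    field_simp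
    ring
  calc ∫⁻ x, ‖𝓕 w x‖ₑ ^ (2 * α / (finrank ℝ E - 2 * s)) ∂μ
      ≤ ∫⁻ x, C * sobolevEnergy s w ^ ((2 * s - finrank ℝ E + α) / (finrank ℝ E - 2 * s)) *
          (∫⁻ u : ℝ, ENNReal.ofReal (rexp ((2 * s - finrank ℝ E + α) * u)) *
            ‖𝓕 ((logShell u).indicator w) x‖ₑ ^ 2) ∂μ := lintegral_mono (pointwise w hw)
    _ ≤ C * sobolevEnergy s w ^ ((2 * s - finrank ℝ E + α) / (finrank ℝ E - 2 * s)) *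
          (ENNReal.ofReal (rexp (2 * π) * K) *
            (ENNReal.ofReal (rexp (2 * s)) * sobolevEnergy s w)) := by
        rw [lintegral_const_mul' _ _ (ENNReal.mul_ne_top hC
          (ENNReal.rpow_ne_top_of_nonneg (div_nonneg (by linarith) ha.le) hE))]
        gcongr
        exact hμ.lintegral_lintegral_fourier_indicator_logShell_le hs hw hE
    _ = C * (ENNReal.ofReal (rexp (2 * π) * K) * ENNReal.ofReal (rexp (2 * s))) *
          (sobolevEnergy s w ^ ((2 * s - finrank ℝ E + α) / (finrank ℝ E - 2 * s)) *
            sobolevEnergy s w ^ (1 : ℝ)) := by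
        rw [ENNReal.rpow_one]; ring
    _ = C * (ENNReal.ofReal (rexp (2 * π) * K) * ENNReal.ofReal (rexp (2 * s))) *
          sobolevEnergy s w ^ (α / (finrank ℝ E - 2 * s)) := by
        rw [← ENNReal.rpow_add_of_nonneg _ _ (div_nonneg (by linarith) ha.le) zero_le_one,
          exponents]
    _ ≤ _ := by
        gcongr <;> exact le_self_add

end TraceInequality

section Spheres

variable {n : ℕ}

lemma DsN_sq {s : ℝ} (hs : 0 ≤ s) (v : Spc n → ℝ) :
    DsN s v ^ 2 = sobolevEnergy s (fourierS v) := by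
  rw [DsN, eLpNorm_two_sq, sobolevEnergy]
  refine lintegral_congr fun ξ ↦ ?_
  rw [enorm_mul, enorm_norm, mul_pow, Real.enorm_rpow_of_nonneg (norm_nonneg ξ) hs, enorm_norm,
    mul_comm 2 s, ENNReal.rpow_mul, ENNReal.rpow_two]

lemma sobolevEnergy_fourierInv (s : ℝ) (f : Spc n → ℂ) :
    sobolevEnergy s (𝓕⁻ f) = sobolevEnergy s (𝓕 f) := by
  simp only [sobolevEnergy, Real.fourierInv_eq_fourier_neg]
  simpa only [enorm_neg] using lintegral_neg_eq_self (fun ξ ↦ ‖ξ‖ₑ ^ (2 * s) * ‖𝓕 f ξ‖ₑ ^ 2)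

lemma integrable_fourierInv {f : Spc n → ℂ} (hf : Integrable (𝓕 f)) : Integrable (𝓕⁻ f) := by
  simpa only [← Real.fourierInv_eq_fourier_neg] using hf.comp_neg

/-- The surface measure of the sphere of radius `r > 0` centred at the origin of `ℝⁿ`, encoded as the
rescaled image of the one of the unit sphere under dilation by `r`. -/
noncomputable def surfaceMeasure (n : ℕ) (r : ℝ) : Measure (Spc n) :=
  ENNReal.ofReal (r ^ (n - 1 : ℝ)) • ((sphM n).map Subtype.val).map (r • ·)

instance (n : ℕ) (r : ℝ) : SFinite (surfaceMeasure n r) := by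
  unfold surfaceMeasure sphM
  infer_instance

lemma hasGaussianGrowth_surfaceMeasure [Nontrivial (Spc n)] {r : ℝ} (hr : 0 < r) :
    HasGaussianGrowth (surfaceMeasure n r) (n - 1) (rexp π * √2 ^ n) := by
  simpa only [surfaceMeasure, sphM, finrank_euclideanSpace_fin] using
    (hasGaussianGrowth_map_toSphere (E := Spc n)).map_smul hr

lemma ofReal_rpow_mul_sphN {p r : ℝ} (hp : 0 < p) (hr : 0 < r) {v : Spc n → ℝ}
    (hv : Measurable v) :
    ENNReal.ofReal (r ^ ((n - 1) / p)) * sphN n p v r =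
      (∫⁻ x, ‖v x‖ₑ ^ p ∂(surfaceMeasure n r)) ^ (1 / p) := by
  rw [surfaceMeasure, lintegral_smul_measure, lintegral_map (by fun_prop) (by fun_prop),
    lintegral_map (by fun_prop) (by fun_prop), smul_eq_mul,
    ENNReal.mul_rpow_of_nonneg _ _ (by positivity),
    ENNReal.ofReal_rpow_of_nonneg (by positivity) (by positivity), ← Real.rpow_mul hr.le,
    mul_one_div, sphN]
  rfl

theorem exists_lintegral_surfaceMeasure_le {s p : ℝ} (hs1 : 1 / 2 < s) (hs2 : s < n / 2)
    (hp : (n - 1) / p = n / 2 - s) :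
    ∃ C : ℝ≥0∞, C ≠ ⊤ ∧ ∀ v : Spc n → ℝ, Continuous v → Integrable v → Integrable (fourierS v) →
      ∀ r : ℝ, 0 < r → ∫⁻ x, ‖v x‖ₑ ^ p ∂(surfaceMeasure n r) ≤ C * DsN s v ^ p := by
  have hp0 : p ≠ 0 := by
    rintro rfl
    rw [_root_.div_zero] at hp
    linarith
  have exponent : ((n : ℝ) - 1) / (n - 2 * s) = p / 2 := by
    rw [div_eq_iff hp0] at hp
    rw [div_eq_iff (by linarith)]
    linarith
  have : Nontrivial (Spc n) := Module.nontrivial_of_finrank_pos (R := ℝ) <| by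
    rw [finrank_euclideanSpace_fin]
    exact_mod_cast (by linarith : (0 : ℝ) < n)
  obtain ⟨C, hC, bound⟩ := exists_lintegral_fourier_rpow_le (E := Spc n) (F := ℂ) (s := s)
    (α := n - 1) (rexp π * √2 ^ n) (by linarith) (by rw [finrank_euclideanSpace_fin]; linarith)
    (by rw [finrank_euclideanSpace_fin]; linarith)
  rw [finrank_euclideanSpace_fin, mul_div_assoc, exponent, mul_div_cancel₀ _ two_ne_zero] at bound
  refine ⟨C, hC, fun v hv hvi hFv r hr ↦ ?_⟩
  have inversion : 𝓕 (𝓕⁻ fun x ↦ (v x : ℂ)) = fun x ↦ (v x : ℂ) :=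
    (Complex.continuous_ofReal.comp hv).fourier_fourierInv_eq hvi.ofReal hFv
  calc ∫⁻ x, ‖v x‖ₑ ^ p ∂(surfaceMeasure n r)
      = ∫⁻ x, ‖𝓕 (𝓕⁻ fun x ↦ (v x : ℂ)) x‖ₑ ^ p ∂(surfaceMeasure n r) := by
        simp only [inversion, enorm_eq_nnnorm, Complex.nnnorm_real]
    _ ≤ C * sobolevEnergy s (𝓕⁻ fun x ↦ (v x : ℂ)) ^ (p / 2) :=
        bound _ (hasGaussianGrowth_surfaceMeasure hr) _ (integrable_fourierInv hFv)
    _ = C * DsN s v ^ p := by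
        rw [sobolevEnergy_fourierInv, ← fourierS, ← DsN_sq (by linarith),
          ← ENNReal.rpow_natCast_mul, Nat.cast_ofNat, mul_div_cancel₀ _ two_ne_zero]

theorem trace_inequality_fractional_general (s p : ℝ) (hs1 : 1 / 2 < s) (hs2 : s < n / 2)
    (hp : (n - 1) / p = n / 2 - s) :
    ∃ C > (0 : ℝ), ∀ v : Spc n → ℝ, Continuous v → Integrable v → Integrable (fourierS v) →
      ∀ r : ℝ, 0 < r →
        ENNReal.ofReal (r ^ (n / 2 - s)) * sphN n p v r ≤ ENNReal.ofReal C * DsN s v := by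
  have hp0 : 0 < p := (div_pos_iff_of_pos_left (by linarith)).1 (hp ▸ sub_pos.2 hs2)
  obtain ⟨C, hC, bound⟩ := exists_lintegral_surfaceMeasure_le hs1 hs2 hp
  have hC' : C ^ (1 / p) ≠ ⊤ := ENNReal.rpow_ne_top_of_nonneg (by positivity) hC
  refine ⟨(C ^ (1 / p)).toReal + 1, by positivity, fun v hv hvi hFv r hr ↦ ?_⟩
  calc ENNReal.ofReal (r ^ (n / 2 - s)) * sphN n p v r
      = (∫⁻ x, ‖v x‖ₑ ^ p ∂(surfaceMeasure n r)) ^ (1 / p) := by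
        rw [← hp, ofReal_rpow_mul_sphN hp0 hr hv.measurable]
    _ ≤ (C * DsN s v ^ p) ^ (1 / p) := by
        gcongr
        exact bound v hv hvi hFv r hr
    _ = C ^ (1 / p) * DsN s v := by
        rw [ENNReal.mul_rpow_of_nonneg _ _ (by positivity), ← ENNReal.rpow_mul,
          mul_one_div_cancel hp0.ne', ENNReal.rpow_one]
    _ ≤ ENNReal.ofReal ((C ^ (1 / p)).toReal + 1) * DsN s v := by
        gcongr
        exact (ENNReal.le_ofReal_iff_toReal_le hC' (by positivity)).2 (by linarith)

lemma integrable_fourierS {v : Spc n → ℝ} (hv : ContDiff ℝ ∞ v) (hc : HasCompactSupport v) :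
    Integrable (fourierS v) := by
  let φ : SchwartzMap (Spc n) ℂ := HasCompactSupport.toSchwartzMap
    (hc.comp_left Complex.ofReal_zero) (Complex.ofRealCLM.contDiff.comp hv)
  have fourier_eq : fourierS v = (𝓕 φ : SchwartzMap (Spc n) ℂ) := SchwartzMap.fourier_coe φ
  exact fourier_eq ▸ (𝓕 φ : SchwartzMap (Spc n) ℂ).integrable

end Spheres

/-- The fractional trace-type inequality (3.25) of Lemma 3.4 (i). -/
theorem trace_inequality_fractional (s p : ℝ) (hs1 : 1/2 < s) (hs2 : s < 3/2)
    (hp : 2/p = 3/2 - s) :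
    ∃ C > (0 : ℝ), ∀ v : Spc 3 → ℝ, ContDiff ℝ ∞ v → HasCompactSupport v →
      ∀ r : ℝ, 0 < r →
        ENNReal.ofReal (r ^ (3/2 - s)) * sphN 3 p v r ≤ ENNReal.ofReal C * DsN s v := by
  obtain ⟨C, hC, bound⟩ := trace_inequality_fractional_general (n := 3) s p hs1
    (by norm_num [hs2]) (by norm_num [hp])
  exact ⟨C, hC, fun v hv hc ↦ bound v hv.continuous
    (hv.continuous.integrable_of_hasCompactSupport hc) (integrable_fourierS hv hc)⟩
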